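/- There exists a universal constant c₁ > 0 with the following property. Let G be a finite group, n ≥ 2 an integer, π : G → GL(ℂⁿ) a unitary representation, and Ω ⊆ G a sampling set of size m ≥ 1, and suppose C > 0 satisfies: for every y ∈ ℂⁿ and every coordinate j, Σ_{ω∈Ω} |(π(ω)y)_j|² ≤ C·‖y‖₂². Let s ≤ n, D_{s,n} = {x ∈ ℂⁿ : ‖x‖₂ ≤ 1, ‖x‖₀ ≤ s}, and 𝒜 = {A_x : x ∈ D_{s,n}} where A_x ∈ ℂ^{m×n} has row (1/√m)·(π(ω)*x)* for ω ∈ Ω. Then for every t > 0 there exists a finite set 𝒩 ⊆ ℂ^{m×n} such that every A ∈ 𝒜 is within distance t of 𝒩 in operator norm ‖·‖_{2→2}, and log |𝒩| ≤ c₁·(s·C/m)·t⁻²·log(n)·log(4n). -/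

import Mathlib

open scoped ComplexConjugate

/-- The ℓ²-norm of a finitely supported complex vector. -/
noncomputable def l2norm {ι : Type*} [Fintype ι] (v : ι → ℂ) : ℝ :=
  Real.sqrt (∑ i, ‖v i‖ ^ 2)

/-- Number of nonzero entries of a vector. -/
noncomputable def sparsity {n : ℕ} (x : Fin n → ℂ) : ℕ :=
  (Set.toFinite (Function.support x)).toFinset.card

/-- The ℓ²→ℓ² operator norm of a complex matrix. -/
noncomputable def opNorm22 {ι κ : Type*} [Fintype ι] [Fintype κ] (A : Matrix ι κ ℂ) : ℝ :=
  sSup {r : ℝ | ∃ z : κ → ℂ, l2norm z ≤ 1 ∧ r = l2norm (A.mulVec z)}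

/-- The matrix `A_x = (1/√m) · R_Ω (π(g)* x)*_{g∈G}`, whose row indexed by `ω ∈ Ω`
is `(1/√m)` times the conjugate transpose of `π(ω)* x`. -/
noncomputable def Amat {G : Type*} [Group G] [Fintype G] {n : ℕ}
    (π : G →* Matrix.unitaryGroup (Fin n) ℂ) (Ω : Finset G) (x : Fin n → ℂ) :
    Matrix ↥Ω (Fin n) ℂ :=
  fun ω j =>
    (1 / (Real.sqrt Ω.card : ℂ)) *
      conj ((((π (ω : G) : Matrix (Fin n) (Fin n) ℂ)).conjTranspose.mulVec x) j)

section helpers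
open Matrix
open scoped Matrix.Norms.L2Operator

theorem spec {d : Type*} [Fintype d] [DecidableEq d] (X : Matrix d d ℂ) (hX : X.IsHermitian) :
    ∃ (U : Matrix d d ℂ) (a : d → ℝ), Uᴴ * U = 1 ∧ U * Uᴴ = 1 ∧
      ∀ q : ℕ, X ^ q = U * diagonal (fun i => ((a i ^ q : ℝ) : ℂ)) * Uᴴ := by
  refine ⟨hX.eigenvectorUnitary, hX.eigenvalues, ?_, ?_, ?_⟩
  · exact (Matrix.mem_unitaryGroup_iff').1 hX.eigenvectorUnitary.2
  · exact (Matrix.mem_unitaryGroup_iff).1 hX.eigenvectorUnitary.2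
  · have h1 : (hX.eigenvectorUnitary : Matrix d d ℂ)ᴴ * hX.eigenvectorUnitary = 1 :=
      (Matrix.mem_unitaryGroup_iff').1 hX.eigenvectorUnitary.2
    have h2 : (hX.eigenvectorUnitary : Matrix d d ℂ) * (hX.eigenvectorUnitary : Matrix d d ℂ)ᴴ = 1 :=
      (Matrix.mem_unitaryGroup_iff).1 hX.eigenvectorUnitary.2
    have h3 := hX.spectral_theorem
    rw [Unitary.conjStarAlgAut_apply] at h3
    generalize (hX.eigenvectorUnitary : Matrix d d ℂ) = U at *
    generalize hX.eigenvalues = a at *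
    clear hX
    rw [star_eq_conjTranspose] at h3
    intro q
    induction q with
    | zero => simp [h2]
    | succ q ih =>
      rw [pow_succ, ih]
      calc _ = U * diagonal (fun i => ((a i ^ q : ℝ) : ℂ)) * Uᴴ *
            (U * diagonal (RCLike.ofReal ∘ a) * Uᴴ) := by rw [← h3]
        _ = U * diagonal (fun i => ((a i ^ q : ℝ) : ℂ)) * (Uᴴ * U) *
            diagonal (RCLike.ofReal ∘ a) * Uᴴ := by simp only [mul_assoc]
        _ = _ := by
          rw [h1, mul_one, mul_assoc U, diagonal_mul_diagonal]
          congr; ext i; simp [pow_succ]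

theorem trace_form {d : Type*} [Fintype d] [DecidableEq d] (M : Matrix d d ℂ) (a b : d → ℝ) :
    (trace (Mᴴ * diagonal (fun i => (a i : ℂ)) * M * diagonal (fun i => (b i : ℂ)))).re
      = ∑ k, ∑ j, a j * b k * ‖M j k‖ ^ 2 := by
  simp only [trace, diag_apply, mul_diagonal, Matrix.mul_apply (M := Mᴴ * _), conjTranspose_apply, Complex.re_sum]
  refine Finset.sum_congr rfl fun k _ => ?_
  rw [Finset.sum_mul, Complex.re_sum]
  refine Finset.sum_congr rfl fun j _ => ?_
  have : (star (M j k) * (a j:ℂ) * M j k * (b k:ℂ)) = ((a j * b k * ‖M j k‖^2 : ℝ):ℂ) := by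
    have := Complex.conj_mul' (M j k)
    push_cast
    rw [← this]
    simp only [RCLike.star_def]; ring
  rw [this, Complex.ofReal_re]

theorem scalar_ineq (a b : ℝ) (q r k : ℕ) (h : q + r = 2 * k) :
    a ^ q * b ^ r ≤ a ^ (2*k) + b ^ (2*k) := by
  have h1 : a ^ q * b ^ r ≤ |a| ^ q * |b| ^ r := by
    rw [← abs_pow, ← abs_pow, ← abs_mul]; exact le_abs_self _
  have ea : a ^ (2*k) = |a| ^ (2*k) := by rw [pow_mul, pow_mul, sq_abs]
  have eb : b ^ (2*k) = |b| ^ (2*k) := by rw [pow_mul, pow_mul, sq_abs]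
  rw [ea, eb]
  refine h1.trans ?_
  have ha := abs_nonneg a
  have hb := abs_nonneg b
  rcases le_total |a| |b| with hh | hh
  · calc |a| ^ q * |b| ^ r ≤ |b| ^ q * |b| ^ r := by gcongr
      _ = |b| ^ (2*k) := by rw [← pow_add, h]
      _ ≤ _ := by have := pow_nonneg ha (2*k); linarith
  · calc |a| ^ q * |b| ^ r ≤ |a| ^ q * |a| ^ r := by gcongr
      _ = |a| ^ (2*k) := by rw [← pow_add, h]
      _ ≤ _ := by have := pow_nonneg hb (2*k); linarith

theorem trace_ineq {d : Type*} [Fintype d] [DecidableEq d] (X Y H : Matrix d d ℂ)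
    (hX : X.IsHermitian) (hY : Y.IsHermitian) (hH : H.IsHermitian) (q r k : ℕ) (h : q + r = 2 * k) :
    (trace (H * X ^ q * H * Y ^ r)).re ≤
      (trace (H * X ^ (2*k) * H)).re + (trace (H * Y ^ (2*k) * H)).re := by
  obtain ⟨U, a, hU1, hU2, hUX⟩ := spec X hX
  obtain ⟨V, b, hV1, hV2, hVY⟩ := spec Y hY
  have key : ∀ q r : ℕ, (trace (H * X ^ q * H * Y ^ r)).re
      = ∑ k, ∑ j, a j ^ q * b k ^ r * ‖(Uᴴ * H * V) j k‖ ^ 2 := by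
    intro q r
    rw [← trace_form (Uᴴ * H * V) (fun j => a j ^ q) (fun j => b j ^ r), hUX, hVY]
    have : H * (U * diagonal (fun i => ((a i ^ q : ℝ) : ℂ)) * Uᴴ) * H * (V * diagonal (fun i => ((b i ^ r : ℝ) : ℂ)) * Vᴴ) = (H * U * diagonal (fun i => ((a i ^ q : ℝ) : ℂ)) * Uᴴ * H * V * diagonal (fun i => ((b i ^ r : ℝ) : ℂ))) * Vᴴ := by
      simp only [mul_assoc]
    rw [this, trace_mul_comm]
    simp only [conjTranspose_mul, conjTranspose_conjTranspose, hH.eq, mul_assoc]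
  have e1 := key (2*k) 0
  have e2 := key 0 (2*k)
  have e3 : trace (H * X ^ 0 * H * Y ^ (2*k)) = trace (H * Y ^ (2*k) * H) := by
    rw [pow_zero, mul_one, mul_assoc, trace_mul_comm H]
  rw [e3] at e2
  rw [pow_zero, mul_one] at e1
  rw [e1, e2, key, ← Finset.sum_add_distrib]
  refine Finset.sum_le_sum fun k' _ => ?_
  rw [← Finset.sum_add_distrib]
  refine Finset.sum_le_sum fun j _ => ?_
  rw [← add_mul]
  gcongr
  simpa using scalar_ineq (a j) (b k') q r k h

theorem frob {m n : Type*} [Fintype m] [Fintype n] (A : Matrix m n ℂ) :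
    (trace (Aᴴ * A)).re = ∑ j, ∑ i, ‖A i j‖ ^ 2 := by
  simp only [trace, diag_apply, Matrix.mul_apply, conjTranspose_apply, Complex.re_sum]
  refine Finset.sum_congr rfl fun k _ => Finset.sum_congr rfl fun j _ => ?_
  rw [RCLike.star_def, Complex.conj_mul', ← Complex.ofReal_pow, Complex.ofReal_re]

theorem frob_mul {l m n : Type*} [Fintype l] [Fintype m] [Fintype n] [DecidableEq l] [DecidableEq m] [DecidableEq n] (D : Matrix l m ℂ) (A : Matrix m n ℂ)
   (ρ : ℝ) (hD : ‖D‖ ≤ ρ) :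
    (trace ((D * A)ᴴ * (D * A))).re ≤ ρ ^ 2 * (trace (Aᴴ * A)).re := by
  rw [frob, frob, Finset.mul_sum]
  refine Finset.sum_le_sum fun j _ => ?_
  have h := Matrix.l2_opNorm_mulVec D (WithLp.toLp 2 (fun i => A i j))
  have h0 : ‖WithLp.toLp 2 (D *ᵥ (fun i => A i j))‖ ≤ ρ * ‖WithLp.toLp 2 (fun i => A i j)‖ :=
    h.trans (by gcongr)
  have h1 := pow_le_pow_left₀ (norm_nonneg _) h0 2
  rw [mul_pow, EuclideanSpace.norm_sq_eq, EuclideanSpace.norm_sq_eq] at h1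
  exact h1

theorem norm_sq_le_frob {m n : Type*} [Fintype m] [Fintype n] [DecidableEq n] [DecidableEq m] (A : Matrix m n ℂ) :
    ‖A‖ ^ 2 ≤ (trace (Aᴴ * A)).re := by
  rw [frob, Finset.sum_comm]
  have h0 : 0 ≤ ∑ i, ∑ j, ‖A i j‖ ^ 2 := by positivity
  have : ‖A‖ ≤ Real.sqrt (∑ i, ∑ j, ‖A i j‖ ^ 2) := by
    rw [Matrix.l2_opNorm_def]
    refine ContinuousLinearMap.opNorm_le_bound _ (Real.sqrt_nonneg _) fun v => ?_
    refine abs_le_of_sq_le_sq' ?_ (by positivity) |>.2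
    rw [mul_pow, Real.sq_sqrt h0, EuclideanSpace.norm_sq_eq, EuclideanSpace.norm_sq_eq, Finset.sum_mul]
    refine Finset.sum_le_sum fun i _ => ?_
    have e : ‖((LinearEquiv.trans (Matrix.toEuclideanLin) LinearMap.toContinuousLinearMap) A v) i‖ ≤ ∑ j, ‖A i j‖ * ‖v j‖ := by
      change ‖∑ j, A i j * v j‖ ≤ _
      refine (norm_sum_le _ _).trans (le_of_eq ?_)
      simp
    refine (pow_le_pow_left₀ (norm_nonneg _) e 2).trans ?_
    exact Finset.sum_mul_sq_le_sq_mul_sq _ _ _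
  calc _ ≤ _ := pow_le_pow_left₀ (norm_nonneg _) this 2
    _ = _ := Real.sq_sqrt h0

theorem tele {R : Type*} [Ring R] (X Y : R) (N : ℕ) :
    X ^ N - Y ^ N = ∑ q ∈ Finset.range N, X ^ q * (X - Y) * Y ^ (N - 1 - q) := by
  induction N with
  | zero => simp
  | succ N ih =>
    rw [Finset.sum_range_succ]
    have : ∑ q ∈ Finset.range N, X ^ q * (X - Y) * Y ^ (N + 1 - 1 - q) = (∑ q ∈ Finset.range N, X ^ q * (X - Y) * Y ^ (N - 1 - q)) * Y := by
      rw [Finset.sum_mul]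
      refine Finset.sum_congr rfl fun q hq => ?_
      have := Finset.mem_range.1 hq
      rw [mul_assoc _ _ Y, ← pow_succ]
      congr 2; omega
    rw [this, ← ih]
    simp [pow_succ, sub_mul, mul_sub]

theorem herm_pow_norm {d : Type*} [Fintype d] [DecidableEq d] (X : Matrix d d ℂ)
    (hX : X.IsHermitian) (e : ℕ) : ‖X‖ ^ (2 * 2 ^ e) ≤ (trace (X ^ (2 * 2 ^ e))).re := by
  have h : ‖X ^ (2 ^ e)‖ = ‖X‖ ^ (2 ^ e) := by
    have := IsSelfAdjoint.nnnorm_pow_two_pow (x := X) hX e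
    have h3 := congrArg NNReal.toReal this
    rw [NNReal.coe_pow, coe_nnnorm, coe_nnnorm] at h3
    exact h3
  have h2 := norm_sq_le_frob (X ^ (2^e))
  rw [h, ← pow_mul, (hX.pow _).eq, ← pow_add] at h2
  rw [show 2 * 2 ^ e = 2^e + 2^e by ring]
  rw [show 2 ^ e * 2 = 2^e + 2^e by ring] at h2
  exact h2

theorem swap_sum {ι : Type*} [Fintype ι] {L : ℕ} (w : ι → ℝ) (l : Fin L)
    (F : (Fin L → ι) → ι → ℝ) :
    ∑ f : Fin L → ι, ∑ i, (∏ k, w (f k)) * w i * F f i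
      = ∑ f : Fin L → ι, ∑ i, (∏ k, w (f k)) * w i * F (Function.update f l i) (f l) := by
  rw [← Fintype.sum_prod_type', ← Fintype.sum_prod_type']
  let e : ((Fin L → ι) × ι) → ((Fin L → ι) × ι) := fun p => (Function.update p.1 l p.2, p.1 l)
  have he : Function.Involutive e := by
    rintro ⟨f, i⟩
    simp [e]
  refine (Fintype.sum_equiv he.toPerm _ _ ?_).symm
  rintro ⟨f, i⟩
  simp only [Function.Involutive.coe_toPerm, e]
  congr 1
  rw [← Finset.mul_prod_erase _ _ (Finset.mem_univ l),
    ← Finset.mul_prod_erase Finset.univ (fun k => w (Function.update f l i k)) (Finset.mem_univ l)]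
  have : ∏ x ∈ Finset.univ.erase l, w (Function.update f l i x)
      = ∏ x ∈ Finset.univ.erase l, w (f x) := by
    refine Finset.prod_congr rfl fun x hx => ?_
    rw [Function.update_of_ne (Finset.ne_of_mem_erase hx)]
  rw [this]
  simp only [Function.update_self]
  ring

/-- centered sum -/
noncomputable def Xs {ι d : Type*} [Fintype ι] {L : ℕ} (w : ι → ℝ) (H : ι → Matrix d d ℂ)
    (f : Fin L → ι) : Matrix d d ℂ := ∑ l, (H (f l) - ∑ j, w j • H j)

theorem Xs_herm {ι d : Type*} [Fintype ι] {L : ℕ} (w : ι → ℝ) (H : ι → Matrix d d ℂ)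
    (hH : ∀ i, (H i).IsHermitian) (f : Fin L → ι) : (Xs w H f).IsHermitian := by
  unfold Xs Matrix.IsHermitian
  simp only [conjTranspose_sum, conjTranspose_sub, conjTranspose_smul, (hH _).eq, star_trivial]

theorem Xs_update {ι d : Type*} [Fintype ι] {L : ℕ} (w : ι → ℝ) (H : ι → Matrix d d ℂ)
    (f : Fin L → ι) (l : Fin L) (i : ι) :
    Xs w H f - Xs w H (Function.update f l i) = H (f l) - H i := by
  unfold Xs
  rw [← Finset.sum_sub_distrib, Finset.sum_eq_single l]
  · simp
  · intro b _ hb; simp [Function.update_of_ne hb]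
  · simp

theorem sum_W {ι : Type*} [Fintype ι] {L : ℕ} (w : ι → ℝ) (hw1 : ∑ i, w i = 1) :
    ∑ f : Fin L → ι, ∏ k, w (f k) = 1 := by
  rw [← Fintype.sum_pow, hw1, one_pow]

theorem step_l {ι d : Type*} [Fintype ι] [Fintype d] [DecidableEq d] {L : ℕ}
    (w : ι → ℝ) (hw : ∀ i, 0 ≤ w i) (hw1 : ∑ i, w i = 1) (H : ι → Matrix d d ℂ)
    (hH : ∀ i, (H i).IsHermitian) (k : ℕ) (T : (Fin L → ι) → ℝ)
    (hT : ∀ f i j, (trace ((H i - H j) * Xs w H f ^ (2*k) * (H i - H j))).re ≤ T f) (l : Fin L) :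
    ∑ f : Fin L → ι, (∏ k, w (f k)) * (trace ((H (f l) - ∑ j, w j • H j) * Xs w H f ^ (2*k+1))).re
      ≤ (2*k+1) * ∑ f : Fin L → ι, (∏ k, w (f k)) * T f := by
  have h1 : ∑ f : Fin L → ι, (∏ k, w (f k)) * (trace ((H (f l) - ∑ j, w j • H j) * Xs w H f ^ (2*k+1))).re
      = ∑ f : Fin L → ι, ∑ i, (∏ k, w (f k)) * w i * (trace ((H (f l) - H i) * Xs w H f ^ (2*k+1))).re := by
    refine Finset.sum_congr rfl fun f _ => ?_
    have : H (f l) - ∑ j, w j • H j = ∑ i, w i • (H (f l) - H i) := by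
      simp only [smul_sub, Finset.sum_sub_distrib]
      rw [← Finset.sum_smul, hw1, one_smul]
    rw [this, Finset.sum_mul, trace_sum, Complex.re_sum, Finset.mul_sum]
    refine Finset.sum_congr rfl fun i _ => ?_
    rw [smul_mul_assoc, trace_smul, Complex.smul_re, smul_eq_mul, mul_assoc]
  have h2 := swap_sum w l (fun f i => (trace ((H (f l) - H i) * Xs w H f ^ (2*k+1))).re)
  simp only [Function.update_self] at h2
  have h3 : ∀ f : Fin L → ι, ∀ i, (trace ((H (f l) - H i) * Xs w H f ^ (2*k+1))).re
      + (trace ((H i - H (f l)) * Xs w H (Function.update f l i) ^ (2*k+1))).re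
      ≤ (2*k+1) * (T f + T (Function.update f l i)) := by
    intro f i
    have e : (trace ((H (f l) - H i) * Xs w H f ^ (2*k+1))).re
      + (trace ((H i - H (f l)) * Xs w H (Function.update f l i) ^ (2*k+1))).re
      = (trace ((H (f l) - H i) * (Xs w H f ^ (2*k+1) - Xs w H (Function.update f l i) ^ (2*k+1)))).re := by
      rw [← Complex.add_re, ← trace_add]
      congr 2
      noncomm_ring
    rw [e, tele, Finset.mul_sum, trace_sum, Complex.re_sum, Xs_update]
    have : ∀ q ∈ Finset.range (2*k+1), (trace ((H (f l) - H i) * (Xs w H f ^ q * (H (f l) - H i) * Xs w H (Function.update f l i) ^ (2*k+1-1-q)))).re ≤ T f + T (Function.update f l i) := by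
      intro q hq
      have hq := Finset.mem_range.1 hq
      rw [← mul_assoc, ← mul_assoc]
      refine (trace_ineq _ _ _ (Xs_herm w H hH _) (Xs_herm w H hH _) ((hH _).sub (hH _)) q (2*k+1-1-q) k (by omega)).trans ?_
      exact add_le_add (hT _ _ _) (hT _ _ _)
    refine (Finset.sum_le_sum this).trans (le_of_eq ?_)
    rw [Finset.sum_const, Finset.card_range, nsmul_eq_mul]
    push_cast
    ring
  have h4 := swap_sum w l (fun f _ => T f)
  have h5 : ∑ f : Fin L → ι, ∑ i, (∏ k, w (f k)) * w i * T f = ∑ f : Fin L → ι, (∏ k, w (f k)) * T f := by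
    refine Finset.sum_congr rfl fun f _ => ?_
    rw [← Finset.sum_mul, ← Finset.mul_sum, hw1, mul_one]
  have h6 : ∑ f : Fin L → ι, ∑ i, (∏ k, w (f k)) * w i * ((trace ((H (f l) - H i) * Xs w H f ^ (2*k+1))).re
      + (trace ((H i - H (f l)) * Xs w H (Function.update f l i) ^ (2*k+1))).re)
      ≤ ∑ f : Fin L → ι, ∑ i, (∏ k, w (f k)) * w i * ((2*k+1) * (T f + T (Function.update f l i))) := by
    refine Finset.sum_le_sum fun f _ => Finset.sum_le_sum fun i _ => ?_
    refine mul_le_mul_of_nonneg_left (h3 f i) ?_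
    exact mul_nonneg (Finset.prod_nonneg fun _ _ => hw _) (hw _)
  have h7 : ∑ f : Fin L → ι, ∑ i, (∏ k, w (f k)) * w i * ((2*k+1) * (T f + T (Function.update f l i)))
     = (2*k+1) * (∑ f : Fin L → ι, ∑ i, (∏ k, w (f k)) * w i * T f + ∑ f : Fin L → ι, ∑ i, (∏ k, w (f k)) * w i * T (Function.update f l i)) := by
    simp only [Finset.mul_sum, ← Finset.sum_add_distrib]
    refine Finset.sum_congr rfl fun f _ => Finset.sum_congr rfl fun i _ => ?_
    ring
  rw [h7, ← h4, h5] at h6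
  simp only [mul_add ((∏ k, w (_)) * w _), Finset.sum_add_distrib] at h6
  rw [← h2, ← h1] at h6
  linarith

theorem step {ι d : Type*} [Fintype ι] [Fintype d] [DecidableEq d] {L : ℕ}
    (w : ι → ℝ) (hw : ∀ i, 0 ≤ w i) (hw1 : ∑ i, w i = 1) (H : ι → Matrix d d ℂ)
    (hH : ∀ i, (H i).IsHermitian) (k : ℕ) (T : (Fin L → ι) → ℝ)
    (hT : ∀ f i j, (trace ((H i - H j) * Xs w H f ^ (2*k) * (H i - H j))).re ≤ T f) :
    ∑ f : Fin L → ι, (∏ k, w (f k)) * (trace (Xs w H f ^ (2*(k+1)))).re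
      ≤ L * ((2*k+1) * ∑ f : Fin L → ι, (∏ k, w (f k)) * T f) := by
  have h1 : ∑ f : Fin L → ι, (∏ k, w (f k)) * (trace (Xs w H f ^ (2*(k+1)))).re
     = ∑ l : Fin L, ∑ f : Fin L → ι, (∏ k, w (f k)) * (trace ((H (f l) - ∑ j, w j • H j) * Xs w H f ^ (2*k+1))).re := by
    rw [Finset.sum_comm]
    refine Finset.sum_congr rfl fun f _ => ?_
    rw [← Finset.mul_sum, ← Complex.re_sum, ← trace_sum, ← Finset.sum_mul]
    congr 3
    rw [show 2*(k+1) = (2*k+1)+1 by ring, pow_succ']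
    rfl
  rw [h1]
  refine (Finset.sum_le_sum fun l _ => step_l w hw hw1 H hH k T hT l).trans (le_of_eq ?_)
  simp

theorem moments {ι d : Type*} [Fintype ι] [Fintype d] [DecidableEq d] {L : ℕ}
    (w : ι → ℝ) (hw : ∀ i, 0 ≤ w i) (hw1 : ∑ i, w i = 1) (H : ι → Matrix d d ℂ)
    (hH : ∀ i, (H i).IsHermitian) (ρ : ℝ) (hρ : ∀ i j, ‖H i - H j‖ ≤ ρ) (τ : ℝ) (hτ0 : 0 ≤ τ)
    (hτ : ∀ i j, (trace ((H i - H j) * (H i - H j))).re ≤ τ * ρ ^ 2) (p : ℕ) (k : ℕ) (hk : k + 1 ≤ p) :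
    ∑ f : Fin L → ι, (∏ k, w (f k)) * (trace (Xs w H f ^ (2*(k+1)))).re
      ≤ τ * (2 * p * L * ρ ^ 2) ^ (k+1) := by
  induction k with
  | zero =>
    refine (step w hw hw1 H hH 0 (fun _ => τ * ρ ^ 2) (fun _ i j => by simpa using hτ i j)).trans ?_
    rw [← Finset.sum_mul, sum_W w hw1]
    have hp : (1:ℝ) ≤ p := by exact_mod_cast hk
    have : 0 ≤ τ * ρ^2 * L := by positivity
    simp only [zero_add, pow_one]
    push_cast
    nlinarith
  | succ k ih =>
    have ih := ih (by omega)
    refine (step w hw hw1 H hH (k+1) (fun f => ρ ^ 2 * (trace (Xs w H f ^ (2*(k+1)))).re) ?_).trans ?_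
    · intro f i j
      have hX := (Xs_herm w H hH f).pow (k+1)
      have h := frob_mul (H i - H j) (Xs w H f ^ (k+1)) ρ (hρ i j)
      rw [conjTranspose_mul, hX.eq, ((hH i).sub (hH j)).eq, ← pow_add, ← two_mul] at h
      refine le_trans (le_of_eq ?_) h
      congr 1
      rw [two_mul, pow_add]
      rw [show (H i - H j) * (Xs w H f ^ (k+1) * Xs w H f ^ (k+1)) * (H i - H j)
        = ((H i - H j) * Xs w H f ^ (k+1)) * (Xs w H f ^ (k+1) * (H i - H j)) by
          simp only [mul_assoc], trace_mul_comm]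
    · have e : ∑ f : Fin L → ι, (∏ k, w (f k)) * (ρ ^ 2 * (trace (Xs w H f ^ (2*(k+1)))).re)
        = ρ ^ 2 * ∑ f : Fin L → ι, (∏ k, w (f k)) * (trace (Xs w H f ^ (2*(k+1)))).re := by
        rw [Finset.mul_sum]; refine Finset.sum_congr rfl fun f _ => by ring
      rw [e]
      have hp : (2 * ((k+1 : ℕ) : ℝ) + 1) ≤ 2 * p := by
        have : ((k + 1 + 1 : ℕ):ℝ) ≤ p := by exact_mod_cast hk
        push_cast at this ⊢; linarith
      calc _ ≤ L * ((2 * ((k+1 : ℕ) : ℝ) + 1) * (ρ ^ 2 * (τ * (2 * p * L * ρ ^ 2) ^ (k+1)))) := by gcongr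
        _ ≤ L * ((2 * p) * (ρ ^ 2 * (τ * (2 * p * L * ρ ^ 2) ^ (k+1)))) := by gcongr
        _ = _ := by ring

theorem exists_le {ι : Type*} [Fintype ι] {L : ℕ}
    (w : ι → ℝ) (hw : ∀ i, 0 ≤ w i) (hw1 : ∑ i, w i = 1) (F : (Fin L → ι) → ℝ) (b : ℝ)
    (h : ∑ f : Fin L → ι, (∏ k, w (f k)) * F f ≤ b) : ∃ f, F f ≤ b := by
  by_contra! hc
  have h1 := sum_W (L := L) w hw1
  have h2 : b < ∑ f : Fin L → ι, (∏ k, w (f k)) * F f := by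
    have e : b = ∑ f : Fin L → ι, (∏ k, w (f k)) * b := by rw [← Finset.sum_mul, h1, one_mul]
    have h0 : ∀ f : Fin L → ι, 0 ≤ ∏ k, w (f k) := fun f => Finset.prod_nonneg fun _ _ => hw _
    have : ∃ f : Fin L → ι, 0 < ∏ k, w (f k) := by
      by_contra! hn
      have := Finset.sum_nonpos (s := Finset.univ) fun f _ => hn f
      linarith
    obtain ⟨f, hf⟩ := this
    rw [e]
    refine Finset.sum_lt_sum (fun f _ => mul_le_mul_of_nonneg_left (hc f).le (h0 f)) ⟨f, Finset.mem_univ _, ?_⟩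
    exact mul_lt_mul_of_pos_left (hc f) hf
  linarith

/-- Hermitian dilation as a real-linear map -/
noncomputable def dil (α β : Type*) : Matrix α β ℂ →ₗ[ℝ] Matrix (α ⊕ β) (α ⊕ β) ℂ where
  toFun B := fromBlocks 0 B Bᴴ 0
  map_add' A B := by simp [fromBlocks_add, conjTranspose_add]
  map_smul' c A := by simp [fromBlocks_smul, conjTranspose_smul]

theorem dil_apply {α β : Type*} (B : Matrix α β ℂ) : dil α β B = fromBlocks 0 B Bᴴ 0 := rfl

theorem dil_herm {α β : Type*} (B : Matrix α β ℂ) : (dil α β B).IsHermitian := by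
  rw [dil_apply, IsHermitian, fromBlocks_conjTranspose]; simp

theorem l2_bound {α β : Type*} [Fintype α] [Fintype β] [DecidableEq β] (B : Matrix α β ℂ) (v : β → ℂ) :
    ∑ i, ‖(B *ᵥ v) i‖ ^ 2 ≤ ‖B‖ ^ 2 * ∑ j, ‖v j‖ ^ 2 := by
  have h := Matrix.l2_opNorm_mulVec B (WithLp.toLp 2 v)
  have h1 := pow_le_pow_left₀ (norm_nonneg _) h 2
  rw [mul_pow, EuclideanSpace.norm_sq_eq, EuclideanSpace.norm_sq_eq] at h1
  exact h1

theorem l2_le {α β : Type*} [Fintype α] [Fintype β] [DecidableEq β] (B : Matrix α β ℂ) (r : ℝ) (hr : 0 ≤ r)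
    (h : ∀ v : β → ℂ, ∑ i, ‖(B *ᵥ v) i‖ ^ 2 ≤ r ^ 2 * ∑ j, ‖v j‖ ^ 2) : ‖B‖ ≤ r := by
  rw [Matrix.l2_opNorm_def]
  refine ContinuousLinearMap.opNorm_le_bound _ hr fun v => ?_
  refine abs_le_of_sq_le_sq' ?_ (by positivity) |>.2
  rw [mul_pow, EuclideanSpace.norm_sq_eq, EuclideanSpace.norm_sq_eq]
  exact h v.ofLp

theorem norm_dil_le {α β : Type*} [Fintype α] [Fintype β] [DecidableEq α] [DecidableEq β] (B : Matrix α β ℂ) :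
    ‖dil α β B‖ ≤ ‖B‖ := by
  refine l2_le _ _ (norm_nonneg _) fun v => ?_
  rw [dil_apply, fromBlocks_mulVec, Fintype.sum_sum_type, Fintype.sum_sum_type]
  have h1 := l2_bound B (v ∘ Sum.inr)
  have h2 := l2_bound Bᴴ (v ∘ Sum.inl)
  rw [l2_opNorm_conjTranspose] at h2
  simp only [zero_mulVec, zero_add, add_zero, Sum.elim_inl, Sum.elim_inr, Function.comp] at h1 h2 ⊢
  linarith

theorem norm_le_dil {α β : Type*} [Fintype α] [Fintype β] [DecidableEq α] [DecidableEq β] (B : Matrix α β ℂ) :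
    ‖B‖ ≤ ‖dil α β B‖ := by
  refine l2_le _ _ (norm_nonneg _) fun v => ?_
  have h := l2_bound (dil α β B) (Sum.elim 0 v)
  rw [dil_apply, fromBlocks_mulVec, Fintype.sum_sum_type, Fintype.sum_sum_type] at h
  simpa [dil_apply] using h

theorem trace_dil {α β : Type*} [Fintype α] [Fintype β] [DecidableEq α] [DecidableEq β] (B : Matrix α β ℂ)
    (ρ : ℝ) (hB : ‖B‖ ≤ ρ) :
    (trace (dil α β B * dil α β B)).re ≤ (2 * Fintype.card β) * ρ ^ 2 := by
  rw [dil_apply, fromBlocks_multiply]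
  have e : ∀ (P : Matrix α α ℂ) (Q : Matrix α β ℂ) (S : Matrix β α ℂ) (T : Matrix β β ℂ),
      trace (fromBlocks P Q S T) = trace P + trace T := by
    intro P Q S T
    simp [trace, Fintype.sum_sum_type]
  rw [e]
  have h := frob_mul B (1 : Matrix β β ℂ) ρ hB
  simp only [Matrix.mul_one, conjTranspose_one, trace_one, Complex.natCast_re] at h
  simp only [Matrix.mul_zero, zero_add, add_zero, Complex.add_re]
  rw [trace_mul_comm B]
  linarith

theorem maurey {ι α : Type*} [Fintype ι] [Fintype α] {n : ℕ} (hn : 2 ≤ n)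
    (B : ι → Matrix α (Fin n) ℂ) (R : ℝ) (hB : ∀ i, ‖B i‖ ≤ R)
    (w : ι → ℝ) (hw : ∀ i, 0 ≤ w i) (hw1 : ∑ i, w i = 1) (L : ℕ) (hL : 0 < L) (t : ℝ) (ht : 0 < t)
    (hLt : 96 * R ^ 2 * Real.log n ≤ L * t ^ 2) :
    ∃ f : Fin L → ι, ‖∑ i, w i • B i - (L : ℝ)⁻¹ • ∑ l, B (f l)‖ ≤ t := by
  classical
  have hlog2 : 0.6931471803 < Real.log 2 := Real.log_two_gt_d9
  have hlogn : Real.log 2 ≤ Real.log n := Real.log_le_log (by norm_num) (by exact_mod_cast hn)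
  obtain ⟨e, he1, he2⟩ := exists_nat_pow_near (x := 2 * Real.log n) (y := 2) (by linarith) (by norm_num)
  have hp : 1 ≤ 2 ^ e := Nat.one_le_two_pow
  set p : ℕ := 2 ^ e with hpdef
  have hpr : ((p : ℕ) : ℝ) = 2 ^ e := by simp [hpdef]
  have hp1 : (p : ℝ) ≤ 2 * Real.log n := by rw [hpr]; exact he1
  have hp2 : Real.log n < p := by rw [hpr]; rw [pow_succ] at he2; linarith
  have hnR : (n : ℝ) ≤ 3 ^ p := by
    have hn0 : (0:ℝ) < n := by exact_mod_cast (by omega : 0 < n)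
    calc (n:ℝ) = Real.exp (Real.log n) := (Real.exp_log hn0).symm
      _ ≤ Real.exp p := Real.exp_le_exp.2 hp2.le
      _ = Real.exp 1 ^ p := by rw [← Real.exp_nat_mul, mul_one]
      _ ≤ 3 ^ p := by
        have := Real.exp_one_lt_d9
        gcongr; linarith
  have h2p : (2:ℝ) ≤ 2 ^ p := by
    calc (2:ℝ) = 2 ^ 1 := by norm_num
      _ ≤ _ := pow_le_pow_right₀ (by norm_num) hp
  have hR : 0 ≤ R ^ 2 := by positivity
  let H : ι → Matrix (α ⊕ Fin n) (α ⊕ Fin n) ℂ := fun i => dil _ _ (B i)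
  have hH : ∀ i, (H i).IsHermitian := fun i => dil_herm _
  have hd : ∀ i j, ‖B i - B j‖ ≤ 2 * R := fun i j =>
    (norm_sub_le _ _).trans (by linarith [hB i, hB j])
  have hM := moments (L := L) w hw hw1 H hH (2 * R)
    (fun i j => by
      simp only [H]; rw [← map_sub]; exact (norm_dil_le _).trans (hd i j))
    (2 * n) (by positivity)
    (fun i j => by
      simp only [H]; rw [← map_sub]; simpa using trace_dil _ _ (hd i j)) p (p - 1) (by omega)
  rw [Nat.sub_add_cancel hp] at hM
  obtain ⟨f, hf⟩ := exists_le w hw hw1 _ _ hM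
  refine ⟨f, ?_⟩
  have hX := herm_pow_norm _ (Xs_herm w H hH f) e
  rw [← hpdef] at hX
  have hLr : (0:ℝ) < L := by exact_mod_cast hL
  have hb : ‖Xs w H f‖ ^ (2 * p) ≤ (L * t) ^ (2 * p) := by
    calc _ ≤ _ := hX
      _ ≤ _ := hf
      _ ≤ 2 ^ p * 3 ^ p * (2 * p * L * (2 * R) ^ 2) ^ p := by gcongr
      _ = (48 * R ^ 2 * p * L) ^ p := by rw [← mul_pow, ← mul_pow]; ring
      _ ≤ ((L * t) ^ 2) ^ p := by
        refine pow_le_pow_left₀ (by positivity) ?_ _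
        calc 48 * R ^ 2 * p * L ≤ 48 * R ^ 2 * (2 * Real.log n) * L := by gcongr
          _ = (96 * R ^ 2 * Real.log n) * L := by ring
          _ ≤ (L * t ^ 2) * L := by gcongr
          _ = _ := by ring
      _ = _ := by rw [pow_mul]
  have hb2 : ‖Xs w H f‖ ≤ L * t := le_of_pow_le_pow_left₀ (by omega) (by positivity) hb
  have hXd : Xs w H f = dil _ _ (∑ l, (B (f l) - ∑ j, w j • B j)) := by
    simp only [Xs, H, map_sum, map_sub, map_smul]
  rw [hXd] at hb2
  have hb3 := (norm_le_dil _).trans hb2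
  have e1 : ∑ i, w i • B i - (L : ℝ)⁻¹ • ∑ l, B (f l)
      = -((L : ℝ)⁻¹ • (∑ l, (B (f l) - ∑ j, w j • B j))) := by
    rw [Finset.sum_sub_distrib, Finset.sum_const, Finset.card_univ, Fintype.card_fin, smul_sub,
      ← Nat.cast_smul_eq_nsmul ℝ, smul_smul, inv_mul_cancel₀ hLr.ne', one_smul, neg_sub]
  rw [e1, norm_neg, norm_smul, norm_inv, Real.norm_natCast]
  calc (L:ℝ)⁻¹ * _ ≤ (L:ℝ)⁻¹ * (L * t) := by gcongr
    _ = t := by field_simp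

theorem l2norm_sq {ι : Type*} [Fintype ι] (v : ι → ℂ) : l2norm v ^ 2 = ∑ i, ‖v i‖ ^ 2 :=
  Real.sq_sqrt (by positivity)

theorem opNorm22_le {α β : Type*} [Fintype α] [Fintype β] [DecidableEq β] (A : Matrix α β ℂ) :
    opNorm22 A ≤ ‖A‖ := by
  unfold opNorm22
  refine csSup_le ⟨_, 0, by simp [l2norm], rfl⟩ ?_
  rintro r ⟨z, hz, rfl⟩
  have h := l2_bound A z
  rw [← l2norm_sq, ← l2norm_sq, ← mul_pow] at h
  have h0 : 0 ≤ l2norm z := Real.sqrt_nonneg _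
  have := abs_le_of_sq_le_sq' h (by positivity) |>.2
  nlinarith [norm_nonneg A]

theorem Amat_sum {G ι : Type*} [Group G] [Fintype G] [Fintype ι] {n : ℕ}
    (π : G →* Matrix.unitaryGroup (Fin n) ℂ) (Ω : Finset G) (w : ι → ℝ) (v : ι → Fin n → ℂ) :
    Amat π Ω (∑ i, w i • v i) = ∑ i, w i • Amat π Ω (v i) := by
  ext ω j
  simp only [Amat, Matrix.sum_apply, Matrix.smul_apply, mulVec_sum, mulVec_smul, Finset.sum_apply,
    Pi.smul_apply, map_sum, Finset.mul_sum, Complex.real_smul, map_mul, Complex.conj_ofReal]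
  refine Finset.sum_congr rfl fun i _ => by ring

theorem Amat_single {G : Type*} [Group G] [Fintype G] {n : ℕ}
    (π : G →* Matrix.unitaryGroup (Fin n) ℂ) (Ω : Finset G) (C : ℝ) (hC : 0 < C)
    (h : ∀ (y : Fin n → ℂ) (j : Fin n),
              ∑ ω ∈ Ω, ‖((π ω : Matrix (Fin n) (Fin n) ℂ).mulVec y) j‖ ^ 2 ≤
                C * (l2norm y) ^ 2) (k : Fin n) (c : ℂ) (r : ℝ) (hr : 0 ≤ r)
    (hcr : ‖c‖ ^ 2 * (C / Ω.card) ≤ r ^ 2) :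
    ‖Amat π Ω (Pi.single k c)‖ ≤ r := by
  refine l2_le _ _ hr fun z => ?_
  have e : ∀ ω : Ω, ‖(Amat π Ω (Pi.single k c) *ᵥ z) ω‖ ^ 2
      = ‖c‖ ^ 2 / Ω.card * ‖((π (ω : G) : Matrix (Fin n) (Fin n) ℂ).mulVec z) k‖ ^ 2 := by
    intro ω
    have : (Amat π Ω (Pi.single k c) *ᵥ z) ω
        = (1 / (Real.sqrt Ω.card : ℂ)) * conj c * ((π (ω : G) : Matrix (Fin n) (Fin n) ℂ).mulVec z) k := by
      simp only [mulVec, dotProduct, Amat, Finset.mul_sum]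
      refine Finset.sum_congr rfl fun j _ => ?_
      rw [Finset.sum_eq_single k]
      · simp; ring
      · intro b _ hb; simp [hb]
      · simp
    rw [this, norm_mul, norm_mul, mul_pow, mul_pow, RCLike.norm_conj]
    simp only [one_div, norm_inv, Complex.norm_real, Real.norm_eq_abs, inv_pow, sq_abs]
    rw [Real.sq_sqrt (by positivity)]
    ring
  simp only [e]
  rw [← Finset.mul_sum, Finset.sum_coe_sort Ω (fun ω => ‖((π ω : Matrix (Fin n) (Fin n) ℂ).mulVec z) k‖ ^ 2)]
  calc _ ≤ ‖c‖ ^ 2 / Ω.card * (C * (l2norm z) ^ 2) := by gcongr; exact h z k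
    _ = ‖c‖ ^ 2 * (C / Ω.card) * ∑ j, ‖z j‖ ^ 2 := by rw [l2norm_sq]; ring
    _ ≤ _ := by gcongr

theorem l1_bound {n s : ℕ} (x : Fin n → ℂ) (hx : l2norm x ≤ 1) (hs : sparsity x ≤ s) :
    ∑ k, ‖x k‖ ≤ Real.sqrt s := by
  refine Real.le_sqrt_of_sq_le ?_
  set S := (Set.toFinite (Function.support x)).toFinset with hS
  have h1 : ∑ k, ‖x k‖ = ∑ k ∈ S, 1 * ‖x k‖ := by
    simp only [one_mul]
    refine (Finset.sum_subset (Finset.subset_univ _) ?_).symm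
    intro k _ hk
    simpa [hS] using hk
  rw [h1]
  refine (Finset.sum_mul_sq_le_sq_mul_sq _ _ _).trans ?_
  have h2 : ∑ k ∈ S, ‖x k‖ ^ 2 ≤ 1 := by
    calc _ ≤ ∑ k, ‖x k‖ ^ 2 := Finset.sum_le_sum_of_subset_of_nonneg (Finset.subset_univ _) (fun _ _ _ => by positivity)
      _ = l2norm x ^ 2 := (l2norm_sq x).symm
      _ ≤ 1 := pow_le_one₀ (Real.sqrt_nonneg _) hx
  have h3 : ((S.card : ℕ) : ℝ) ≤ s := by exact_mod_cast hs
  simp only [one_pow, Finset.sum_const, nsmul_eq_mul, mul_one]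
  calc _ ≤ (S.card : ℝ) * 1 := by gcongr
    _ ≤ _ := by linarith

/-- the four units -/
noncomputable def uu : Fin 4 → ℂ := ![1, -1, Complex.I, -Complex.I]

theorem decomp {n : ℕ} (hn : 0 < n) (x : Fin n → ℂ) (K : ℝ) (hK : 0 < K) (hx : 2 * ∑ k, ‖x k‖ ≤ K) :
    ∃ w : Fin n × Fin 4 → ℝ, (∀ i, 0 ≤ w i) ∧ ∑ i, w i = 1 ∧
      x = ∑ i, w i • (Pi.single i.1 ((K : ℂ) * uu i.2) : Fin n → ℂ) := by
  let part : Fin n → Fin 4 → ℝ := fun k =>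
    ![max (x k).re 0, max (-(x k).re) 0, max (x k).im 0, max (-(x k).im) 0]
  have hpart : ∀ k a, 0 ≤ part k a := by
    intro k a
    fin_cases a <;> simp [part]
  have hmax : ∀ a : ℝ, max a 0 - max (-a) 0 = a := fun a => by
    rcases le_total a 0 with h | h
    · rw [max_eq_right h, max_eq_left (by linarith)]; ring
    · rw [max_eq_left h, max_eq_right (by linarith)]; ring
  have hmax2 : ∀ a : ℝ, max a 0 + max (-a) 0 = |a| := fun a => by
    rcases le_total a 0 with h | h
    · rw [max_eq_right h, max_eq_left (by linarith), abs_of_nonpos h]; ring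
    · rw [max_eq_left h, max_eq_right (by linarith), abs_of_nonneg h]; ring
  have hpsum : ∀ k, ∑ a, part k a ≤ 2 * ‖x k‖ := by
    intro k
    simp only [part, Fin.sum_univ_four]
    simp
    have := Complex.abs_re_le_norm (x k)
    have := Complex.abs_im_le_norm (x k)
    have := hmax2 (x k).re
    have := hmax2 (x k).im
    linarith
  set P : ℝ := ∑ k, ∑ a, part k a with hP
  have hPK : P ≤ K := by
    refine le_trans ?_ hx
    rw [Finset.mul_sum]
    exact Finset.sum_le_sum fun k _ => hpsum k
  have hnr : (0:ℝ) < n := by exact_mod_cast hn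
  set δ : ℝ := (1 - P / K) / (4 * n) with hδ
  have hδ0 : 0 ≤ δ := by
    have : P / K ≤ 1 := (div_le_one hK).2 hPK
    refine div_nonneg (by linarith) (by positivity)
  refine ⟨fun i => part i.1 i.2 / K + δ, fun i => ?_, ?_, ?_⟩
  · have := hpart i.1 i.2
    positivity
  · rw [Finset.sum_add_distrib, ← Finset.sum_div, Fintype.sum_prod_type, ← hP]
    simp only [Finset.sum_const, Finset.card_univ, Fintype.card_prod, Fintype.card_fin, nsmul_eq_mul]
    rw [hδ]; push_cast; field_simp; ring
  · ext k
    rw [Fintype.sum_prod_type, Finset.sum_apply, Finset.sum_eq_single k]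
    · rw [Finset.sum_apply, Fin.sum_univ_four]
      have hKc : (K : ℂ) ≠ 0 := by exact_mod_cast hK.ne'
      simp only [Pi.smul_apply, Pi.single_eq_same, Complex.real_smul, part, uu]
      have e1 := hmax (x k).re
      have e2 := hmax (x k).im
      apply Complex.ext
      · simp
        field_simp
        linarith
      · simp
        field_simp
        linarith
    · intro b _ hb
      rw [Finset.sum_apply]
      refine Finset.sum_eq_zero fun a _ => ?_
      simp [Pi.single_eq_of_ne hb.symm]
    · simp

theorem main_net {G : Type} [Group G] [Fintype G] (n m s : ℕ) (hn : 2 ≤ n)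
    (π : G →* Matrix.unitaryGroup (Fin n) ℂ) (Ω : Finset G) (hm : Ω.card = m) (hm1 : 1 ≤ m)
    (C : ℝ) (hC : 0 < C)
    (h : ∀ (y : Fin n → ℂ) (j : Fin n),
              ∑ ω ∈ Ω, ‖((π ω : Matrix (Fin n) (Fin n) ℂ).mulVec y) j‖ ^ 2 ≤
                C * (l2norm y) ^ 2)
    (hs : 1 ≤ s) (t : ℝ) (ht : 0 < t) :
    ∃ 𝒩 : Finset (Matrix ↥Ω (Fin n) ℂ),
                (∀ x : Fin n → ℂ, l2norm x ≤ 1 → sparsity x ≤ s →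
                    ∃ A' ∈ 𝒩, opNorm22 (Amat π Ω x - A') ≤ t) ∧
                Real.log 𝒩.card ≤
                  400 * (s * C / m) * t⁻¹ ^ 2 * Real.log n * Real.log (4 * n) := by
  classical
  have hsr : (0:ℝ) < s := by exact_mod_cast hs
  have hmr : (0:ℝ) < m := by exact_mod_cast hm1
  have hnr : (2:ℝ) ≤ n := by exact_mod_cast hn
  have hlog2 : 0.6931471803 < Real.log 2 := Real.log_two_gt_d9
  have hlogn : Real.log 2 ≤ Real.log n := Real.log_le_log (by norm_num) hnr
  have hlog4n : 0 < Real.log (4 * n) := Real.log_pos (by linarith)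
  set K : ℝ := 2 * Real.sqrt s with hKdef
  have hK : 0 < K := by positivity
  have hK2 : K ^ 2 = 4 * s := by rw [hKdef, mul_pow, Real.sq_sqrt hsr.le]; norm_num
  set V : ℝ := s * C / m with hV
  have hV0 : 0 < V := by positivity
  set R : ℝ := Real.sqrt (4 * V) with hRdef
  have hR0 : 0 ≤ R := Real.sqrt_nonneg _
  have hR2 : R ^ 2 = 4 * V := Real.sq_sqrt (by positivity)
  let B : Fin n × Fin 4 → Matrix ↥Ω (Fin n) ℂ := fun i =>
    Amat π Ω (Pi.single i.1 ((K : ℂ) * uu i.2))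
  have hB : ∀ i, ‖B i‖ ≤ R := by
    rintro ⟨k, a⟩
    refine Amat_single π Ω C hC h k _ R hR0 ?_
    have hu : ‖uu a‖ = 1 := by fin_cases a <;> simp [uu]
    rw [norm_mul, hu, mul_one, Complex.norm_real, Real.norm_eq_abs, sq_abs, hK2, hR2, hV, hm]
    apply le_of_eq; ring
  have hdec : ∀ x : Fin n → ℂ, l2norm x ≤ 1 → sparsity x ≤ s →
      ∃ w : Fin n × Fin 4 → ℝ, (∀ i, 0 ≤ w i) ∧ ∑ i, w i = 1 ∧
        Amat π Ω x = ∑ i, w i • B i := by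
    intro x hx hxs
    obtain ⟨w, h1, h2, h3⟩ := decomp (by omega) x K hK
      (by have := l1_bound x hx hxs; rw [hKdef]; linarith)
    refine ⟨w, h1, h2, ?_⟩
    rw [← Amat_sum, ← h3]
  by_cases hbig : R ≤ t
  · refine ⟨{0}, fun x hx hxs => ⟨0, by simp, ?_⟩, ?_⟩
    · obtain ⟨w, h1, h2, h3⟩ := hdec x hx hxs
      rw [sub_zero]
      refine (opNorm22_le _).trans (le_trans ?_ hbig)
      rw [h3]
      calc _ ≤ ∑ i, ‖w i • B i‖ := norm_sum_le _ _
        _ ≤ ∑ i, w i * R := by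
          refine Finset.sum_le_sum fun i _ => ?_
          rw [norm_smul, Real.norm_eq_abs, abs_of_nonneg (h1 i)]
          exact mul_le_mul_of_nonneg_left (hB i) (h1 i)
        _ = R := by rw [← Finset.sum_mul, h2, one_mul]
    · simp only [Finset.card_singleton, Nat.cast_one, Real.log_one]
      have : 0 < Real.log n := by linarith
      positivity
  · push Not at hbig
    have hQ : 1 ≤ 4 * (V * t⁻¹ ^ 2) := by
      have h1 : t ^ 2 ≤ 4 * V := by rw [← hR2]; gcongr
      have h2 : (4 * (V * t⁻¹ ^ 2)) = 4 * V / t ^ 2 := by field_simp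
      rw [h2, le_div_iff₀ (by positivity)]; linarith
    set Q := V * t⁻¹ ^ 2 with hQdef
    set L : ℕ := ⌈384 * Q * Real.log n⌉₊ with hLdef
    have hlognpos : 0 < Real.log n := by linarith
    have hQ0 : 0 < Q := by positivity
    have hL : 0 < L := Nat.ceil_pos.2 (by positivity)
    have hL1 : 384 * Q * Real.log n ≤ L := Nat.le_ceil _
    have hL2 : (L:ℝ) ≤ 384 * Q * Real.log n + 1 := (Nat.ceil_lt_add_one (by positivity)).le
    have hVQ : V = Q * t ^ 2 := by rw [hQdef]; field_simp
    refine ⟨Finset.univ.image (fun f : Fin L → Fin n × Fin 4 => (L : ℝ)⁻¹ • ∑ l, B (f l)), ?_, ?_⟩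
    · intro x hx hxs
      obtain ⟨w, h1, h2, h3⟩ := hdec x hx hxs
      obtain ⟨f, hf⟩ := maurey hn B R hB w h1 h2 L hL t ht (by
        rw [hR2, hVQ]
        calc _ = (384 * Q * Real.log n) * t ^ 2 := by ring
          _ ≤ _ := by gcongr)
      refine ⟨_, Finset.mem_image_of_mem _ (Finset.mem_univ f), ?_⟩
      rw [h3]
      exact (opNorm22_le _).trans hf
    · set N := Finset.univ.image (fun f : Fin L → Fin n × Fin 4 => (L : ℝ)⁻¹ • ∑ l, B (f l)) with hN
      have hcard : N.card ≤ (4 * n) ^ L := by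
        refine Finset.card_image_le.trans (le_of_eq ?_)
        simp [mul_comm]
      have hne : 0 < N.card := by
        rw [Finset.card_pos, hN]
        exact ⟨_, Finset.mem_image_of_mem _ (Finset.mem_univ (fun _ => (⟨0, by omega⟩, 0)))⟩
      calc Real.log N.card ≤ Real.log ((4 * n : ℝ) ^ L) := by
            refine Real.log_le_log (by exact_mod_cast hne) (by exact_mod_cast hcard)
        _ = L * Real.log (4 * n) := by rw [Real.log_pow]
        _ ≤ (400 * Q * Real.log n) * Real.log (4 * n) := by
            gcongr
            nlinarith
        _ = _ := by rw [hQdef]; ring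
end helpers

theorem stmt10 :
    ∃ c₁ : ℝ, 0 < c₁ ∧
      ∀ (G : Type) (_ : Group G) (_ : Fintype G) (n m s : ℕ), 2 ≤ n →
        ∀ (π : G →* Matrix.unitaryGroup (Fin n) ℂ) (Ω : Finset G),
          Ω.card = m → 1 ≤ m →
          ∀ C : ℝ, 0 < C →
            (∀ (y : Fin n → ℂ) (j : Fin n),
              ∑ ω ∈ Ω, ‖((π ω : Matrix (Fin n) (Fin n) ℂ).mulVec y) j‖ ^ 2 ≤
                C * (l2norm y) ^ 2) →
            1 ≤ s → s ≤ n →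
            ∀ t : ℝ, 0 < t →
              ∃ 𝒩 : Finset (Matrix ↥Ω (Fin n) ℂ),
                (∀ x : Fin n → ℂ, l2norm x ≤ 1 → sparsity x ≤ s →
                    ∃ A' ∈ 𝒩, opNorm22 (Amat π Ω x - A') ≤ t) ∧
                Real.log 𝒩.card ≤
                  c₁ * (s * C / m) * t⁻¹ ^ 2 * Real.log n * Real.log (4 * n) := by
  refine ⟨400, by norm_num, ?_⟩
  intro G _ _ n m s hn π Ω hm hm1 C hC h hs _ t ht
  exact main_net n m s hn π Ω hm hm1 C hC h hs t ht
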